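/- Let 1 < p ≤ 2 and let λ satisfy 0 < λ < 1/p*, where p* is the Hölder conjugate of p, and set σ_j = j^{−λ} for j ∈ ℕ. Then for every ε ∈ (0,1) and every n ∈ ℕ there exists m₀ > n such that for all m ≥ m₀, if G_{n,m} is an n×m random matrix with i.i.d. standard Gaussian entries, then Pr[rad(E^m_{p,σ}, ker G_{n,m}) ≥ 1/2] ≥ 1 − ε. -/

import Mathlib

open MeasureTheory ProbabilityTheory
open scoped ENNReal NNReal

/-- The `ℓ_p`-(quasi-)norm on `ℝ^m`, for `0 < p ≤ ∞`. -/
noncomputable def lpnorm (p : ℝ≥0∞) {m : ℕ} (x : Fin m → ℝ) : ℝ :=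
  if p = ∞ then ⨆ j, |x j| else (∑ j, |x j| ^ p.toReal) ^ (1 / p.toReal)

/-- The `ℓ_p`-ellipsoid with semiaxes `σ`. -/
noncomputable def ellipsoid (p : ℝ≥0∞) {m : ℕ} (σ : Fin m → ℝ) : Set (Fin m → ℝ) :=
  {x | lpnorm p (fun j => x j / σ j) ≤ 1}

/-- `rad_q(K, E)`: the supremum of the `ℓ_q`-norm over `K ∩ E`. -/
noncomputable def radq (q : ℝ≥0∞) {m : ℕ} (K E : Set (Fin m → ℝ)) : ℝ :=
  sSup (lpnorm q '' (K ∩ E))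

/-- The distribution of an `n × m` random matrix with i.i.d. standard Gaussian entries. -/
noncomputable def gaussianMatrix (n m : ℕ) : Measure (Fin n → Fin m → ℝ) :=
  Measure.pi fun _ : Fin n => Measure.pi fun _ : Fin m => gaussianReal 0 1

/-- The kernel of a matrix `A ∈ ℝ^{n×m}`, as a subset of `ℝ^m`. -/
def kerSet {n m : ℕ} (A : Fin n → Fin m → ℝ) : Set (Fin m → ℝ) :=
  {x | ∀ i, ∑ j, A i j * x j = 0}

/-- The Hölder conjugate `p*` of `p ∈ (1, ∞]`, as a real number
(with the convention `(∞ : ℝ≥0∞).toReal = 0`, so `pstar ∞ = 1`). -/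
noncomputable def pstar (p : ℝ≥0∞) : ℝ := (1 - 1 / p.toReal)⁻¹

/-!
If `A` is the random matrix and `A Aᵀ` is invertible, then `y = Aᵀ (A Aᵀ)⁻¹ A e₁` satisfies
`e₁ - y ∈ ker A`. For fixed `n` and large `m`, `A Aᵀ` is close to `m • 1` by Chebyshev's inequality
and the rows of `A` have `ℓ_p`-norm of order about `m ^ (1 / p)` by Markov's inequality, so
`‖y‖_p` is of order about `m ^ (1 / p - 1)`. As `1 / σ_j ≤ m ^ λ`, the vector `y / σ` has
`ℓ_p`-norm of order about `m ^ (λ + 1 / p - 1)`, which tends to `0`. Hence `e₁ - y`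
scaled by a factor close to `σ₁` lies in the ellipsoid, while its first coordinate, and so its
Euclidean norm, is at least a number close to `σ₁`.
-/

open Filter Topology
open scoped Matrix Matrix.Norms.Frobenius

section LpNorm

variable {p : ℝ≥0∞} {m : ℕ}

lemma lpnorm_eq_norm_toLp (hp : p ≠ 0) (x : Fin m → ℝ) : lpnorm p x = ‖WithLp.toLp p x‖ := by
  rcases eq_or_ne p ∞ with rfl | hp_top
  · simp [lpnorm, PiLp.norm_eq_ciSup]
  · simp [lpnorm, hp_top, PiLp.norm_eq_sum (ENNReal.toReal_pos hp hp_top)]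

lemma lpnorm_mono {x y : Fin m → ℝ} (hxy : ∀ j, |x j| ≤ |y j|) : lpnorm p x ≤ lpnorm p y := by
  unfold lpnorm
  split_ifs with hp
  · exact ciSup_mono (Set.finite_range _).bddAbove hxy
  · exact Real.rpow_le_rpow (by positivity)
      (Finset.sum_le_sum fun j _ => Real.rpow_le_rpow (abs_nonneg _) (hxy j) (by positivity))
      (by positivity)

lemma lpnorm_rpow_toReal (hp : p ≠ 0) (hp_top : p ≠ ∞) (x : Fin m → ℝ) :
    lpnorm p x ^ p.toReal = ∑ j, |x j| ^ p.toReal := by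
  rw [lpnorm, if_neg hp_top, one_div,
    Real.rpow_inv_rpow (by positivity) (ENNReal.toReal_pos hp hp_top).ne']

lemma lpnorm_top_rpow_le_sum {r : ℝ} (hr : 0 < r) (x : Fin m → ℝ) :
    lpnorm ∞ x ^ r ≤ ∑ j, |x j| ^ r := by
  rw [← Real.le_rpow_inv_iff_of_pos _ (by positivity) hr, lpnorm, if_pos rfl]
  · refine Real.iSup_le (fun j => ?_) (by positivity)
    rw [Real.le_rpow_inv_iff_of_pos (abs_nonneg _) (by positivity) hr]
    exact Finset.single_le_sum (f := fun j => |x j| ^ r) (fun _ _ => by positivity)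
      (Finset.mem_univ j)
  · exact Real.iSup_nonneg fun _ => abs_nonneg _

variable [Fact (1 ≤ p)]

lemma ne_zero_of_fact_one_le : p ≠ 0 := (zero_lt_one.trans_le Fact.out).ne'

lemma lpnorm_nonneg (x : Fin m → ℝ) : 0 ≤ lpnorm p x := by
  rw [lpnorm_eq_norm_toLp ne_zero_of_fact_one_le]
  exact norm_nonneg _

lemma abs_apply_le_lpnorm (x : Fin m → ℝ) (j : Fin m) : |x j| ≤ lpnorm p x := by
  rw [lpnorm_eq_norm_toLp ne_zero_of_fact_one_le]
  exact PiLp.norm_apply_le (WithLp.toLp p x) j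

lemma lpnorm_sub_le (x y : Fin m → ℝ) : lpnorm p (x - y) ≤ lpnorm p x + lpnorm p y := by
  simp only [lpnorm_eq_norm_toLp ne_zero_of_fact_one_le]
  exact norm_sub_le (WithLp.toLp p x) (WithLp.toLp p y)

lemma lpnorm_smul (a : ℝ) (x : Fin m → ℝ) : lpnorm p (a • x) = |a| * lpnorm p x := by
  simp only [lpnorm_eq_norm_toLp ne_zero_of_fact_one_le]
  exact norm_smul a (WithLp.toLp p x)

lemma lpnorm_single (j : Fin m) (a : ℝ) : lpnorm p (Pi.single j a) = |a| := by
  rw [lpnorm_eq_norm_toLp ne_zero_of_fact_one_le]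
  exact PiLp.norm_single p (fun _ => ℝ) j a

lemma lpnorm_vecMul_le {ι : Type*} [Fintype ι] (c : ι → ℝ) (A : Matrix ι (Fin m) ℝ) :
    lpnorm p (c ᵥ* A) ≤ ∑ i, |c i| * lpnorm p (A i) := by
  simp only [lpnorm_eq_norm_toLp ne_zero_of_fact_one_le, Matrix.vecMul_eq_sum, WithLp.toLp_sum]
  refine (norm_sum_le _ _).trans_eq (Finset.sum_congr rfl fun i _ => ?_)
  rw [WithLp.toLp_smul, norm_smul, Real.norm_eq_abs]

lemma lpnorm_div_le {σ : Fin m → ℝ} {b : ℝ} (hb : 0 < b) (hσ : ∀ j, b ≤ σ j)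
    (x : Fin m → ℝ) : lpnorm p (x / σ) ≤ lpnorm p x / b := by
  calc lpnorm p (x / σ) ≤ lpnorm p (b⁻¹ • x) := lpnorm_mono fun j => by
        rw [Pi.div_apply, Pi.smul_apply, smul_eq_mul, inv_mul_eq_div, abs_div, abs_div,
          abs_of_pos hb, abs_of_pos (hb.trans_le (hσ j))]
        gcongr
        exact hσ j
    _ = lpnorm p x / b := by
        rw [lpnorm_smul, abs_of_pos (inv_pos.2 hb), inv_mul_eq_div]

end LpNorm

section Radius

variable {p q : ℝ≥0∞} [Fact (1 ≤ p)] [Fact (1 ≤ q)] {m : ℕ} {σ : Fin m → ℝ}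

lemma ellipsoid_subset_Icc (hσ : ∀ j, 0 < σ j) : ellipsoid p σ ⊆ Set.Icc (-σ) σ := by
  intro x hx
  have abs_le_semiaxis (j) : |x j| ≤ σ j := by
    have h := (abs_apply_le_lpnorm (p := p) (x / σ) j).trans hx
    rwa [Pi.div_apply, abs_div, abs_of_pos (hσ j), div_le_one₀ (hσ j)] at h
  exact ⟨fun j => (abs_le.1 (abs_le_semiaxis j)).1, fun j => (abs_le.1 (abs_le_semiaxis j)).2⟩

lemma bddAbove_lpnorm_image_ellipsoid (hσ : ∀ j, 0 < σ j) :
    BddAbove (lpnorm q '' ellipsoid p σ) := by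
  have continuous_lpnorm : Continuous (lpnorm q : (Fin m → ℝ) → ℝ) := by
    rw [funext (lpnorm_eq_norm_toLp ne_zero_of_fact_one_le)]
    exact (PiLp.continuous_toLp q _).norm
  exact (isCompact_Icc.image continuous_lpnorm).bddAbove.mono
    (Set.image_mono (ellipsoid_subset_Icc hσ))

lemma lpnorm_le_radq (hσ : ∀ j, 0 < σ j) {E : Set (Fin m → ℝ)} {x : Fin m → ℝ}
    (hx : x ∈ ellipsoid p σ) (hxE : x ∈ E) : lpnorm q x ≤ radq q (ellipsoid p σ) E :=
  le_csSup ((bddAbove_lpnorm_image_ellipsoid hσ).mono (Set.image_mono Set.inter_subset_left))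
    ⟨x, ⟨hx, hxE⟩, rfl⟩

lemma le_radq_of_single_sub_mem (hσ : ∀ j, 0 < σ j) {E : Submodule ℝ (Fin m → ℝ)}
    {j : Fin m} {y : Fin m → ℝ} (hy : Pi.single j 1 - y ∈ E) {δ : ℝ}
    (hδ : σ j * lpnorm p (y / σ) ≤ δ) :
    σ j * ((1 - δ) / (1 + δ)) ≤ radq q (ellipsoid p σ) E := by
  have hσj := hσ j
  have hδ0 : 0 ≤ δ := (mul_nonneg hσj.le (lpnorm_nonneg _)).trans hδ
  obtain ⟨s, hs⟩ : ∃ s, s = σ j / (1 + δ) := ⟨_, rfl⟩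
  have hs0 : 0 < s := hs ▸ by positivity
  set x : Fin m → ℝ := s • (Pi.single j 1 - y) with hx
  have div_semiaxes : x / σ = s • (Pi.single j (σ j)⁻¹ - y / σ) := by
    ext k
    rcases eq_or_ne k j with rfl | hk <;> simp [*, mul_div_assoc, sub_div, neg_div]
  have mem_ellipsoid : x ∈ ellipsoid p σ := by
    calc lpnorm p (x / σ) = s * lpnorm p (Pi.single j (σ j)⁻¹ - y / σ) := by
          rw [div_semiaxes, lpnorm_smul, abs_of_pos hs0]
      _ ≤ s * ((σ j)⁻¹ + lpnorm p (y / σ)) := by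
          gcongr
          exact (lpnorm_sub_le _ _).trans_eq (by rw [lpnorm_single, abs_of_pos (inv_pos.2 hσj)])
      _ = (1 + σ j * lpnorm p (y / σ)) / (1 + δ) := by rw [hs]; field_simp
      _ ≤ 1 := div_le_one_of_le₀ (by linarith) (by positivity)
  have apply_le : y j ≤ δ := by
    have h := (le_abs_self _).trans (abs_apply_le_lpnorm (p := p) (y / σ) j)
    rw [Pi.div_apply, div_le_iff₀' hσj] at h
    exact h.trans hδ
  calc σ j * ((1 - δ) / (1 + δ)) = s * (1 - δ) := by rw [hs]; ring
    _ ≤ s * (1 - y j) := by gcongr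
    _ ≤ |x j| := by simpa [hx] using le_abs_self (s * (1 - y j))
    _ ≤ lpnorm q x := abs_apply_le_lpnorm _ j
    _ ≤ radq q (ellipsoid p σ) E := lpnorm_le_radq hσ mem_ellipsoid (E.smul_mem s hy)

lemma kerSet_eq_coe_ker {n : ℕ} (A : Fin n → Fin m → ℝ) :
    kerSet A = LinearMap.ker (Matrix.of A).mulVecLin := by
  ext x
  simp only [kerSet, Set.mem_ofPred_eq, SetLike.mem_coe, LinearMap.mem_ker,
    Matrix.mulVecLin_apply, funext_iff]
  rfl

end Radius

section GramInverse

variable {ι κ : Type*} [Fintype ι] [Fintype κ]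

lemma norm_toLp_mulVec_le (M : Matrix ι κ ℝ) (v : κ → ℝ) :
    ‖WithLp.toLp 2 (M *ᵥ v)‖ ≤ ‖M‖ * ‖WithLp.toLp 2 v‖ := by
  simpa only [← Matrix.frobenius_norm_replicateCol (ι := Unit), Matrix.replicateCol_mulVec]
    using Matrix.frobenius_norm_mul M (Matrix.replicateCol Unit v)

variable [DecidableEq ι]

lemma half_mul_norm_le_norm_mulVec {M : Matrix ι ι ℝ} {t : ℝ} (hM : ‖M - t • 1‖ ≤ t / 2)
    (v : ι → ℝ) : t / 2 * ‖WithLp.toLp 2 v‖ ≤ ‖WithLp.toLp 2 (M *ᵥ v)‖ := by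
  have ht : 0 ≤ t := by linarith [norm_nonneg (M - t • 1)]
  have smul_eq_sub : WithLp.toLp 2 (t • v) =
      WithLp.toLp 2 (M *ᵥ v) - WithLp.toLp 2 ((M - t • 1) *ᵥ v) := by
    rw [← WithLp.toLp_sub, Matrix.sub_mulVec, Matrix.smul_mulVec, Matrix.one_mulVec, sub_sub_cancel]
  have perturbation : ‖WithLp.toLp 2 ((M - t • 1) *ᵥ v)‖ ≤ t / 2 * ‖WithLp.toLp 2 v‖ :=
    (norm_toLp_mulVec_le _ _).trans (by gcongr)
  have triangle := norm_sub_le (WithLp.toLp 2 (M *ᵥ v)) (WithLp.toLp 2 ((M - t • 1) *ᵥ v))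
  rw [← smul_eq_sub, WithLp.toLp_smul, norm_smul, Real.norm_of_nonneg ht] at triangle
  linarith

lemma mulVec_surjective_of_norm_sub_smul_one_le {M : Matrix ι ι ℝ} {t : ℝ} (ht : 0 < t)
    (hM : ‖M - t • 1‖ ≤ t / 2) : Function.Surjective M.mulVec := by
  have injective : Function.Injective M.mulVec := by
    refine (injective_iff_map_eq_zero M.mulVecLin).2 fun v hv => ?_
    have h := half_mul_norm_le_norm_mulVec hM v
    rw [← Matrix.mulVecLin_apply, hv, WithLp.toLp_zero, norm_zero] at h
    have norm_toLp_eq_zero : ‖WithLp.toLp 2 v‖ = 0 :=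
      le_antisymm (nonpos_of_mul_nonpos_right h (half_pos ht)) (norm_nonneg _)
    simpa using norm_toLp_eq_zero
  exact Matrix.mulVec_surjective_iff_isUnit.2 (Matrix.mulVec_injective_iff_isUnit.1 injective)

end GramInverse

section WellConditioned

variable {p q : ℝ≥0∞} {n m : ℕ} {τ L : ℝ} {j₀ : Fin m} {A : Fin n → Fin m → ℝ}

/-- The typical behaviour of a Gaussian `n × m` matrix `A` with `m ≫ n`: the Gram matrix of the rows
is close to `m • 1` in Frobenius norm, the column `j₀` is short in `ℓ_2` and the rows are short in
`ℓ_p`. -/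
structure WellConditioned (p : ℝ≥0∞) (τ L : ℝ) (j₀ : Fin m) (A : Fin n → Fin m → ℝ) : Prop where
  gram : ‖Matrix.of A * (Matrix.of A)ᵀ - (m : ℝ) • 1‖ ≤ m / 2
  column : lpnorm 2 (fun i => A i j₀) ≤ τ
  row : ∀ i, lpnorm p (A i) ≤ L

lemma WellConditioned.exists_mulVec_eq [Fact (1 ≤ p)] (hA : WellConditioned p τ L j₀ A) :
    ∃ y, Matrix.of A *ᵥ y = (fun i => A i j₀) ∧ lpnorm p y ≤ 2 * n * τ * L / m := by
  have hm : (0 : ℝ) < m := Nat.cast_pos.2 j₀.pos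
  obtain ⟨c, hc⟩ := mulVec_surjective_of_norm_sub_smul_one_le hm hA.gram (fun i => A i j₀)
  have norm_c : m / 2 * ‖WithLp.toLp 2 c‖ ≤ τ := by
    refine (half_mul_norm_le_norm_mulVec hA.gram c).trans ?_
    rw [hc, ← lpnorm_eq_norm_toLp two_ne_zero]
    exact hA.column
  have abs_c (k : Fin n) : |c k| ≤ 2 * τ / m := by
    rw [le_div_iff₀ hm]
    have : m / 2 * |c k| ≤ m / 2 * ‖WithLp.toLp 2 c‖ := by
      gcongr
      exact PiLp.norm_apply_le (WithLp.toLp 2 c) k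
    linarith
  refine ⟨c ᵥ* Matrix.of A, ?_, ?_⟩
  · rw [← Matrix.mulVec_transpose, Matrix.mulVec_mulVec, hc]
  · calc lpnorm p (c ᵥ* Matrix.of A) ≤ ∑ i, |c i| * lpnorm p (A i) := lpnorm_vecMul_le c _
      _ ≤ ∑ _i : Fin n, 2 * τ / m * L := by
          gcongr with i
          · exact lpnorm_nonneg _
          · exact (abs_nonneg _).trans (abs_c i)
          · exact abs_c i
          · exact hA.row i
      _ = 2 * n * τ * L / m := by
          rw [Finset.sum_const, Finset.card_univ, Fintype.card_fin, nsmul_eq_mul]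
          ring

lemma WellConditioned.le_radq [Fact (1 ≤ p)] [Fact (1 ≤ q)] (hA : WellConditioned p τ L j₀ A)
    {σ : Fin m → ℝ} {b δ : ℝ} (hb : 0 < b) (hσ : ∀ j, b ≤ σ j)
    (hδ : σ j₀ * (2 * n * τ * L / m / b) ≤ δ) :
    σ j₀ * ((1 - δ) / (1 + δ)) ≤ radq q (ellipsoid p σ) (kerSet A) := by
  have hσ0 (j) : 0 < σ j := hb.trans_le (hσ j)
  obtain ⟨y, hAy, hy⟩ := hA.exists_mulVec_eq
  rw [kerSet_eq_coe_ker]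
  refine le_radq_of_single_sub_mem hσ0 (y := y) ?_ (le_trans ?_ hδ)
  · rw [LinearMap.mem_ker, map_sub, Matrix.mulVecLin_apply, Matrix.mulVecLin_apply, hAy,
      Matrix.mulVec_single_one, sub_eq_zero]
    rfl
  · have := (hσ0 j₀).le
    gcongr
    exact (lpnorm_div_le hb hσ y).trans (by gcongr)

end WellConditioned

section GramMoments

variable {Ω : Type*} {mΩ : MeasurableSpace Ω} {μ : Measure Ω}

lemma memLp_two_mul_of_memLp_four {X Y : Ω → ℝ} (hX : MemLp X 4 μ) (hY : MemLp Y 4 μ) :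
    MemLp (X * Y) 2 μ := by
  have : ENNReal.HolderTriple 4 4 2 := ⟨by
    rw [← two_mul, show (4 : ℝ≥0∞) = 2 * 2 by norm_num, ENNReal.mul_inv (by simp) (by simp),
      ← mul_assoc, ENNReal.mul_inv_cancel (by simp) (by simp), one_mul]⟩
  exact hY.mul hX

lemma integrable_pow_four {X : Ω → ℝ} (hX : MemLp X 4 μ) : Integrable (fun ω => X ω ^ 4) μ := by
  simpa [Even.pow_abs (show Even 4 by decide)] using
    MemLp.integrable_norm_pow (p := 4) hX (by norm_num)

lemma variance_mul_le [IsProbabilityMeasure μ] {X Y : Ω → ℝ} {K : ℝ} (hX : MemLp X 4 μ)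
    (hY : MemLp Y 4 μ) (hXK : ∫ ω, X ω ^ 4 ∂μ ≤ K) (hYK : ∫ ω, Y ω ^ 4 ∂μ ≤ K) :
    Var[X * Y; μ] ≤ K := by
  have hXY := memLp_two_mul_of_memLp_four hX hY
  calc Var[X * Y; μ] ≤ ∫ ω, (X * Y) ω ^ 2 ∂μ := variance_le_expectation_sq hXY.1
    _ ≤ ∫ ω, (X ω ^ 4 + Y ω ^ 4) / 2 ∂μ := by
        refine integral_mono hXY.integrable_sq
          (((integrable_pow_four hX).add (integrable_pow_four hY)).div_const 2) fun ω => ?_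
        simp only [Pi.mul_apply]
        nlinarith [sq_nonneg (X ω ^ 2 - Y ω ^ 2)]
    _ ≤ K := by
        rw [integral_div, integral_add (integrable_pow_four hX) (integrable_pow_four hY)]
        linarith

lemma sq_frobenius_norm {ι κ : Type*} [Fintype ι] [Fintype κ] (M : Matrix ι κ ℝ) :
    ‖M‖ ^ 2 = ∑ i, ∑ k, M i k ^ 2 := by
  rw [Matrix.frobenius_norm_def, ← Real.sqrt_eq_rpow, Real.sq_sqrt (by positivity)]
  simp

variable {ι κ : Type*} [Fintype κ] {G : Ω → Matrix ι κ ℝ}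

lemma gram_apply_eq_sum (i k : ι) :
    (fun ω => (G ω * (G ω)ᵀ) i k) = ∑ j, (fun ω => G ω i j) * fun ω => G ω k j := by
  ext ω
  simp [Matrix.mul_apply]

lemma memLp_gram_apply (hL : ∀ i j, MemLp (fun ω => G ω i j) 4 μ) (i k : ι) :
    MemLp (fun ω => (G ω * (G ω)ᵀ) i k) 2 μ := by
  rw [gram_apply_eq_sum]
  exact memLp_finsetSum' _ fun j _ => memLp_two_mul_of_memLp_four (hL i j) (hL k j)

lemma variance_gram_apply_le [IsProbabilityMeasure μ] {K : ℝ}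
    (hG : iIndepFun (fun (e : ι × κ) ω => G ω e.1 e.2) μ)
    (hL : ∀ i j, MemLp (fun ω => G ω i j) 4 μ) (fourth : ∀ i j, ∫ ω, G ω i j ^ 4 ∂μ ≤ K)
    (i k : ι) : Var[fun ω => (G ω * (G ω)ᵀ) i k; μ] ≤ Fintype.card κ * K := by
  have pairwise_indep (j j' : κ) (hj : j ≠ j') : IndepFun
      ((fun ω => G ω i j) * fun ω => G ω k j) ((fun ω => G ω i j') * fun ω => G ω k j') μ :=
    hG.indepFun_mul_mul₀ (fun e => (hL e.1 e.2).1.aemeasurable) (i, j) (k, j) (i, j') (k, j')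
      (by simp [hj]) (by simp [hj]) (by simp [hj]) (by simp [hj])
  rw [gram_apply_eq_sum,
    IndepFun.variance_sum (fun j _ => memLp_two_mul_of_memLp_four (hL i j) (hL k j))
      fun j _ j' _ hj => pairwise_indep j j' hj]
  calc _ ≤ ∑ _j : κ, K := Finset.sum_le_sum fun j _ =>
        variance_mul_le (hL i j) (hL k j) (fourth i j) (fourth k j)
    _ = Fintype.card κ * K := by simp

variable [DecidableEq ι]

lemma integral_gram_apply [IsFiniteMeasure μ] (hG : iIndepFun (fun (e : ι × κ) ω => G ω e.1 e.2) μ)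
    (hL : ∀ i j, MemLp (fun ω => G ω i j) 4 μ) (mean : ∀ i j, ∫ ω, G ω i j ∂μ = 0)
    (second : ∀ i j, ∫ ω, G ω i j ^ 2 ∂μ = 1) (i k : ι) :
    ∫ ω, (G ω * (G ω)ᵀ) i k ∂μ = ((Fintype.card κ : ℝ) • (1 : Matrix ι ι ℝ)) i k := by
  have integral_mul (j : κ) : ∫ ω, G ω i j * G ω k j ∂μ = (1 : Matrix ι ι ℝ) i k := by
    rcases eq_or_ne i k with rfl | hik
    · simpa only [← sq, Matrix.one_apply_eq] using second i j
    · have h := hG.indepFun (i := (i, j)) (j := (k, j)) (by simp [hik])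
      rw [h.integral_fun_mul_eq_mul_integral (hL i j).1 (hL k j).1, mean, zero_mul,
        Matrix.one_apply_ne hik]
  have integrable_mul (j : κ) : Integrable (fun ω => G ω i j * G ω k j) μ :=
    (memLp_two_mul_of_memLp_four (hL i j) (hL k j)).integrable one_le_two
  simp only [Matrix.mul_apply, Matrix.transpose_apply]
  rw [integral_finsetSum _ fun j _ => integrable_mul j]
  simp [integral_mul]

variable [Fintype ι]

lemma integrable_sq_norm_gram_sub [IsFiniteMeasure μ]
    (hL : ∀ i j, MemLp (fun ω => G ω i j) 4 μ) (t : ℝ) :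
    Integrable (fun ω => ‖G ω * (G ω)ᵀ - t • 1‖ ^ 2) μ := by
  simp only [sq_frobenius_norm, Matrix.sub_apply]
  exact integrable_finsetSum _ fun i _ => integrable_finsetSum _ fun k _ =>
    ((memLp_gram_apply hL i k).sub (memLp_const _)).integrable_sq

lemma integral_sq_norm_gram_sub_le [IsProbabilityMeasure μ] {K : ℝ}
    (hG : iIndepFun (fun (e : ι × κ) ω => G ω e.1 e.2) μ)
    (hL : ∀ i j, MemLp (fun ω => G ω i j) 4 μ) (mean : ∀ i j, ∫ ω, G ω i j ∂μ = 0)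
    (second : ∀ i j, ∫ ω, G ω i j ^ 2 ∂μ = 1) (fourth : ∀ i j, ∫ ω, G ω i j ^ 4 ∂μ ≤ K) :
    ∫ ω, ‖G ω * (G ω)ᵀ - (Fintype.card κ : ℝ) • 1‖ ^ 2 ∂μ
      ≤ Fintype.card ι ^ 2 * (Fintype.card κ * K) := by
  have integrable_sq (i k : ι) : Integrable
      (fun ω => ((G ω * (G ω)ᵀ) i k - ∫ ω, (G ω * (G ω)ᵀ) i k ∂μ) ^ 2) μ :=
    ((memLp_gram_apply hL i k).sub (memLp_const _)).integrable_sq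
  simp only [sq_frobenius_norm, Matrix.sub_apply, ← integral_gram_apply hG hL mean second]
  calc _ = ∑ i, ∑ k, Var[fun ω => (G ω * (G ω)ᵀ) i k; μ] := by
        rw [integral_finsetSum _ fun i _ => integrable_finsetSum _ fun k _ => integrable_sq i k]
        refine Finset.sum_congr rfl fun i _ => ?_
        rw [integral_finsetSum _ fun k _ => integrable_sq i k]
        exact Finset.sum_congr rfl fun k _ =>
          (variance_eq_integral (memLp_gram_apply hL i k).aemeasurable).symm
    _ ≤ ∑ _i : ι, ∑ _k : ι, Fintype.card κ * K := Finset.sum_le_sum fun i _ =>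
        Finset.sum_le_sum fun k _ => variance_gram_apply_le hG hL fourth i k
    _ = _ := by simp only [Finset.sum_const, Finset.card_univ, nsmul_eq_mul]; ring

end GramMoments

section GaussianMatrix

/-- The absolute moment `𝔼|g|^r` of a standard Gaussian random variable `g`. -/
noncomputable def gaussianAbsMoment (r : ℝ) : ℝ := ∫ x, |x| ^ r ∂gaussianReal 0 1

variable {n m : ℕ}

instance isProbabilityMeasure_gaussianMatrix : IsProbabilityMeasure (gaussianMatrix n m) := by
  unfold gaussianMatrix
  infer_instance

lemma measurePreserving_gaussianMatrix_apply (i : Fin n) (j : Fin m) :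
    MeasurePreserving (fun A : Fin n → Fin m → ℝ => A i j) (gaussianMatrix n m)
      (gaussianReal 0 1) :=
  (measurePreserving_eval (fun _ : Fin m => gaussianReal 0 1) j).comp
    (measurePreserving_eval (fun _ : Fin n => Measure.pi fun _ : Fin m => gaussianReal 0 1) i)

lemma iIndepFun_gaussianMatrix_apply :
    iIndepFun (fun (e : Fin n × Fin m) (A : Fin n → Fin m → ℝ) => A e.1 e.2)
      (gaussianMatrix n m) := by
  simpa only [gaussianMatrix, Measure.infinitePi_eq_pi] using
    iIndepFun_uncurry_infinitePi' (X := fun (_ : Fin n) (_ : Fin m) (x : ℝ) => x)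
      (fun _ _ => gaussianReal 0 1) (fun _ _ => measurable_id)

lemma integral_gaussianMatrix_apply {f : ℝ → ℝ} (hf : Measurable f) (i : Fin n) (j : Fin m) :
    ∫ A, f (A i j) ∂gaussianMatrix n m = ∫ x, f x ∂gaussianReal 0 1 := by
  have h := measurePreserving_gaussianMatrix_apply i j
  rw [← h.map_eq, integral_map h.measurable.aemeasurable hf.aestronglyMeasurable]

lemma memLp_gaussianMatrix_apply (r : ℝ≥0) (i : Fin n) (j : Fin m) :
    MemLp (fun A : Fin n → Fin m → ℝ => A i j) r (gaussianMatrix n m) :=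
  (memLp_id_gaussianReal r).comp_measurePreserving (measurePreserving_gaussianMatrix_apply i j)

lemma integrable_abs_rpow_gaussianMatrix_apply {r : ℝ} (hr : 0 < r) (i : Fin n) (j : Fin m) :
    Integrable (fun A : Fin n → Fin m → ℝ => |A i j| ^ r) (gaussianMatrix n m) := by
  simpa [hr.le] using (memLp_gaussianMatrix_apply r.toNNReal i j).integrable_norm_rpow
    (by simpa using hr) ENNReal.coe_ne_top

lemma integral_sq_gaussianReal_zero_one : ∫ x, x ^ 2 ∂gaussianReal 0 1 = 1 := by
  have h := variance_id_gaussianReal (μ := 0) (v := 1)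
  rwa [variance_of_integral_eq_zero aemeasurable_id (by simp), NNReal.coe_one] at h

lemma measureReal_le_integral_div {Ω : Type*} {mΩ : MeasurableSpace Ω} {μ : Measure Ω}
    {f : Ω → ℝ} (hf : Integrable f μ) (hf0 : 0 ≤ f) {t : ℝ} (ht : 0 < t) :
    μ.real {ω | t ≤ f ω} ≤ (∫ ω, f ω ∂μ) / t := by
  rw [le_div_iff₀' ht]
  exact mul_meas_ge_le_integral_of_nonneg (ae_of_all _ hf0) hf t

lemma measureReal_half_lt_norm_gram_sub_le (hm : 0 < m) :
    (gaussianMatrix n m).real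
        {A | (m : ℝ) / 2 < ‖Matrix.of A * (Matrix.of A)ᵀ - (m : ℝ) • 1‖}
      ≤ n ^ 2 * (m * ∫ x, x ^ 4 ∂gaussianReal 0 1) / (m / 2) ^ 2 := by
  have memLp_four (i : Fin n) (j : Fin m) := memLp_gaussianMatrix_apply 4 i j
  have integral_le := integral_sq_norm_gram_sub_le (G := fun A : Fin n → Fin m → ℝ => Matrix.of A)
    iIndepFun_gaussianMatrix_apply memLp_four
    (fun i j => (integral_gaussianMatrix_apply measurable_id i j).trans integral_id_gaussianReal)
    (fun i j => (integral_gaussianMatrix_apply (measurable_id.pow_const 2) i j).trans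
      integral_sq_gaussianReal_zero_one)
    (fun i j => (integral_gaussianMatrix_apply (f := fun x => x ^ 4) (by fun_prop) i j).le)
  simp only [Fintype.card_fin] at integral_le
  calc _ ≤ (gaussianMatrix n m).real
          {A | ((m : ℝ) / 2) ^ 2 ≤ ‖Matrix.of A * (Matrix.of A)ᵀ - (m : ℝ) • 1‖ ^ 2} :=
        measureReal_mono fun A hA => pow_le_pow_left₀ (by positivity) (le_of_lt hA) 2
    _ ≤ _ := measureReal_le_integral_div (integrable_sq_norm_gram_sub
        (G := fun A : Fin n → Fin m → ℝ => Matrix.of A) memLp_four m)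
        (fun _ => by positivity) (by positivity)
    _ ≤ _ := by gcongr

lemma measureReal_lt_lpnorm_le {p : ℝ≥0∞} {N : ℕ} (e : Fin N → Fin n × Fin m) {r : ℝ} (hr : 0 < r)
    (hpr : ∀ x : Fin N → ℝ, lpnorm p x ^ r ≤ ∑ l, |x l| ^ r) {t : ℝ} (ht : 0 < t) :
    (gaussianMatrix n m).real {A | t < lpnorm p fun l => A (e l).1 (e l).2}
      ≤ N * gaussianAbsMoment r / t ^ r := by
  have integrable (l : Fin N) := integrable_abs_rpow_gaussianMatrix_apply hr (e l).1 (e l).2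
  have integral_sum : ∫ A, ∑ l, |A (e l).1 (e l).2| ^ r ∂gaussianMatrix n m
      = N * gaussianAbsMoment r := by
    rw [integral_finsetSum _ fun l _ => integrable l]
    simp [integral_gaussianMatrix_apply (f := fun x => |x| ^ r) (by fun_prop), gaussianAbsMoment]
  calc _ ≤ (gaussianMatrix n m).real {A | t ^ r ≤ ∑ l, |A (e l).1 (e l).2| ^ r} :=
        measureReal_mono fun A hA => (Real.rpow_le_rpow ht.le (le_of_lt hA) hr.le).trans (hpr _)
    _ ≤ _ := measureReal_le_integral_div (integrable_finsetSum _ fun l _ => integrable l)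
        (fun _ => Finset.sum_nonneg fun _ _ => by positivity) (by positivity)
    _ = _ := by rw [integral_sum]

lemma measureReal_not_wellConditioned_le {p : ℝ≥0∞} {r τ L : ℝ} (hr : 0 < r)
    (hpr : ∀ x : Fin m → ℝ, lpnorm p x ^ r ≤ ∑ j, |x j| ^ r) (hτ : 0 < τ) (hL : 0 < L)
    (j₀ : Fin m) :
    (gaussianMatrix n m).real {A | ¬ WellConditioned p τ L j₀ A}
      ≤ n ^ 2 * (m * ∫ x, x ^ 4 ∂gaussianReal 0 1) / (m / 2) ^ 2
        + n * gaussianAbsMoment 2 / τ ^ (2 : ℝ) + n * (m * gaussianAbsMoment r / L ^ r) := by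
  set μ := gaussianMatrix n m
  have column_bound := measureReal_lt_lpnorm_le (p := 2) (fun i : Fin n => (i, j₀)) two_pos
    (fun x => (lpnorm_rpow_toReal two_ne_zero ENNReal.ofNat_ne_top x).le) hτ
  have row_bound (i : Fin n) := measureReal_lt_lpnorm_le (fun j : Fin m => (i, j)) hr hpr hL
  have rows_bound : μ.real (⋃ i, {A | L < lpnorm p (A i)})
      ≤ n * (m * gaussianAbsMoment r / L ^ r) := by
    refine (measureReal_iUnion_fintype_le _).trans ?_
    exact (Finset.sum_le_sum fun i _ => row_bound i).trans_eq (by simp)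
  calc _ ≤ μ.real (({A | (m : ℝ) / 2 < ‖Matrix.of A * (Matrix.of A)ᵀ - (m : ℝ) • 1‖} ∪
          {A | τ < lpnorm 2 fun i => A i j₀}) ∪ ⋃ i, {A | L < lpnorm p (A i)}) := by
        refine measureReal_mono fun A hA => ?_
        contrapose! hA
        simp only [Set.mem_union, Set.mem_iUnion, Set.mem_ofPred_eq, not_or, not_exists,
          not_lt] at hA
        exact not_not.2 ⟨hA.1.1, hA.1.2, hA.2⟩
    _ ≤ _ := (measureReal_union_le _ _).trans (add_le_add_left (measureReal_union_le _ _) _)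
    _ ≤ _ := by
        gcongr
        exact measureReal_half_lt_norm_gram_sub_le j₀.pos

lemma exists_lpnorm_rpow_le_sum {p : ℝ≥0∞} (hp : p ≠ 0) {α : ℝ} (hα : p⁻¹.toReal < α) :
    ∃ r, 0 < r ∧ 1 < α * r ∧ ∀ {m : ℕ} (x : Fin m → ℝ), lpnorm p x ^ r ≤ ∑ j, |x j| ^ r := by
  rcases eq_or_ne p ∞ with rfl | hp_top
  · have hα0 : 0 < α := by simpa using hα
    refine ⟨2 / α, by positivity, ?_, lpnorm_top_rpow_le_sum (by positivity)⟩
    rw [mul_div_cancel₀ _ hα0.ne']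
    exact one_lt_two
  · have hp0 := ENNReal.toReal_pos hp hp_top
    refine ⟨p.toReal, hp0, ?_, fun x => (lpnorm_rpow_toReal hp hp_top x).le⟩
    rwa [ENNReal.toReal_inv, inv_lt_iff_one_lt_mul₀ hp0] at hα

lemma tendsto_measureReal_not_wellConditioned {p : ℝ≥0∞} (hp : p ≠ 0) {s α : ℝ} (hs : 0 < s)
    (hα : p⁻¹.toReal < α) (n : ℕ) :
    Tendsto (fun m : ℕ => (gaussianMatrix n (m + 1)).real
      {A | ¬ WellConditioned p (((m + 1 : ℕ) : ℝ) ^ s) (((m + 1 : ℕ) : ℝ) ^ α) 0 A})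
      atTop (𝓝 0) := by
  obtain ⟨r, hr, hαr, hpr⟩ := exists_lpnorm_rpow_le_sum hp hα
  obtain ⟨K, hK⟩ : ∃ K, K = ∫ x, x ^ 4 ∂gaussianReal 0 1 := ⟨_, rfl⟩
  have bound_tendsto : Tendsto (fun x : ℝ => 4 * n ^ 2 * K * x ^ (-1 : ℝ)
      + n * gaussianAbsMoment 2 * x ^ (-(2 * s))
      + n * gaussianAbsMoment r * x ^ (-(α * r - 1))) atTop (𝓝 0) := by
    have rpow_tendsto (c : ℝ) {t : ℝ} (ht : 0 < t) :
        Tendsto (fun x : ℝ => c * x ^ (-t)) atTop (𝓝 0) := by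
      simpa only [mul_zero] using (tendsto_rpow_neg_atTop ht).const_mul c
    simpa only [add_zero] using ((rpow_tendsto _ one_pos).add
      (rpow_tendsto _ (mul_pos two_pos hs))).add (rpow_tendsto _ (sub_pos.2 hαr))
  refine squeeze_zero (fun _ => measureReal_nonneg) (fun m => ?_)
    (bound_tendsto.comp (tendsto_natCast_atTop_atTop.comp (tendsto_add_atTop_nat 1)))
  have hx : (0 : ℝ) < (m + 1 : ℕ) := by positivity
  refine (measureReal_not_wellConditioned_le hr hpr (by positivity) (by positivity) 0).trans_eq ?_
  simp only [Function.comp_apply]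
  generalize ((m + 1 : ℕ) : ℝ) = x at hx
  rw [← hK, ← Real.rpow_mul hx.le, ← Real.rpow_mul hx.le, Real.rpow_neg_one, Real.rpow_neg hx.le,
    neg_sub, Real.rpow_sub hx, Real.rpow_one, mul_comm s]
  field_simp
  ring

end GaussianMatrix

lemma eventually_le_radq_of_wellConditioned {p q : ℝ≥0∞} [Fact (1 ≤ p)] [Fact (1 ≤ q)]
    {lam s α : ℝ} (hlam : 0 ≤ lam) (hexp : s + α + lam < 1) {σ : ℕ → ℝ}
    (hσ : ∀ j : ℕ, (j + 1 : ℝ) ^ (-lam) ≤ σ j) {ρ : ℝ} (hρ : ρ < σ 0) (n : ℕ) :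
    ∀ᶠ m : ℕ in atTop, ∀ A : Fin n → Fin (m + 1) → ℝ,
      WellConditioned p (((m + 1 : ℕ) : ℝ) ^ s) (((m + 1 : ℕ) : ℝ) ^ α) 0 A →
        ρ ≤ radq q (ellipsoid p fun j : Fin (m + 1) => σ j) (kerSet A) := by
  set δ : ℝ → ℝ := fun x => σ 0 * (2 * n * x ^ (-(1 - (s + α + lam)))) with hδ
  have δ_tendsto : Tendsto δ atTop (𝓝 0) := by
    simpa only [mul_zero] using
      ((tendsto_rpow_neg_atTop (sub_pos.2 hexp)).const_mul (2 * n : ℝ)).const_mul (σ 0)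
  have bound_tendsto : Tendsto (fun x => σ 0 * ((1 - δ x) / (1 + δ x))) atTop (𝓝 (σ 0)) := by
    simpa using ((δ_tendsto.const_sub 1).div (δ_tendsto.const_add 1) (by simp)).const_mul (σ 0)
  have large := (tendsto_natCast_atTop_atTop.comp (tendsto_add_atTop_nat 1)).eventually
    (bound_tendsto.eventually_const_le hρ)
  filter_upwards [large] with m hm A hA
  refine hm.trans (hA.le_radq (σ := fun j : Fin (m + 1) => σ j)
    (b := ((m + 1 : ℕ) : ℝ) ^ (-lam)) (by positivity) (fun j => ?_) (le_of_eq ?_))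
  · refine le_trans (Real.rpow_le_rpow_of_nonpos (by positivity) ?_ (neg_nonpos.2 hlam)) (hσ j)
    exact_mod_cast j.isLt
  · have hx : (0 : ℝ) < (m + 1 : ℕ) := by positivity
    simp only [hδ, Function.comp_apply, Fin.val_zero]
    generalize ((m + 1 : ℕ) : ℝ) = x at hx
    rw [neg_sub, Real.rpow_sub hx, Real.rpow_add hx, Real.rpow_add hx, Real.rpow_one,
      Real.rpow_neg hx.le]
    field_simp

lemma tendsto_measure_one_of_tendsto_measureReal_zero {β : Type*} {l : Filter β} {Ω : β → Type*}
    {mΩ : ∀ b, MeasurableSpace (Ω b)} {μ : ∀ b, Measure (Ω b)} [∀ b, IsProbabilityMeasure (μ b)]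
    {S T : ∀ b, Set (Ω b)} (hST : ∀ᶠ b in l, (S b)ᶜ ⊆ T b)
    (hT : Tendsto (fun b => (μ b).real (T b)) l (𝓝 0)) :
    Tendsto (fun b => μ b (S b)) l (𝓝 1) := by
  have real_tendsto : Tendsto (fun b => (μ b).real (S b)) l (𝓝 1) := by
    have lower_tendsto : Tendsto (fun b => 1 - (μ b).real (T b)) l (𝓝 1) := by
      simpa only [sub_zero] using hT.const_sub 1
    refine tendsto_of_tendsto_of_tendsto_of_le_of_le' lower_tendsto tendsto_const_nhds ?_
      (Eventually.of_forall fun _ => measureReal_le_one)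
    filter_upwards [hST] with b hb
    calc 1 - (μ b).real (T b) ≤ 1 - (μ b).real (S b)ᶜ := sub_le_sub_left (measureReal_mono hb) 1
      _ ≤ (μ b).real (S b) := by
        have h := measureReal_union_le (μ := μ b) (S b) (S b)ᶜ
        rw [Set.union_compl_self, probReal_univ] at h
        linarith
  rw [← ENNReal.toReal_one] at real_tendsto
  exact (ENNReal.tendsto_toReal_iff (fun _ => measure_ne_top _ _) ENNReal.one_ne_top).1 real_tendsto

lemma tendsto_gaussianMatrix_le_radq {p q : ℝ≥0∞} [Fact (1 ≤ p)] [Fact (1 ≤ q)] {lam : ℝ}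
    (hlam0 : 0 ≤ lam) (hlam : lam < 1 - p⁻¹.toReal) {σ : ℕ → ℝ}
    (hσ : ∀ j : ℕ, (j + 1 : ℝ) ^ (-lam) ≤ σ j) {ρ : ℝ} (hρ : ρ < σ 0) (n : ℕ) :
    Tendsto (fun m : ℕ => gaussianMatrix n m
      {A | ρ ≤ radq q (ellipsoid p fun j : Fin m => σ j) (kerSet A)}) atTop (𝓝 1) := by
  obtain ⟨s, hs⟩ : ∃ s, s = (1 - p⁻¹.toReal - lam) / 3 := ⟨_, rfl⟩
  refine (tendsto_add_atTop_iff_nat 1).1 (tendsto_measure_one_of_tendsto_measureReal_zero ?_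
    (tendsto_measureReal_not_wellConditioned (s := s) (α := p⁻¹.toReal + s) (p := p)
      ne_zero_of_fact_one_le (by linarith) (by linarith) n))
  filter_upwards [eventually_le_radq_of_wellConditioned (p := p) (q := q) hlam0
    (by linarith : s + (p⁻¹.toReal + s) + lam < 1) hσ hρ n] with m hm A hA
  exact mt (hm A) hA

theorem statement4_general {p q : ℝ≥0∞} (hp : 1 ≤ p) (hq : 1 ≤ q) {lam : ℝ} (hlam0 : 0 ≤ lam)
    (hlam : lam < 1 - 1 / p.toReal) {σ : ℕ → ℝ} (hσ : ∀ j : ℕ, (j + 1 : ℝ) ^ (-lam) ≤ σ j)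
    {ρ : ℝ} (hρ : ρ < σ 0) {ε : ℝ} (hε : 0 < ε) (n : ℕ) :
    ∃ m₀ : ℕ, n < m₀ ∧ ∀ m : ℕ, m₀ ≤ m →
      ENNReal.ofReal (1 - ε) ≤
        gaussianMatrix n m {A | ρ ≤ radq q (ellipsoid p fun j : Fin m => σ j) (kerSet A)} := by
  have : Fact (1 ≤ p) := ⟨hp⟩
  have : Fact (1 ≤ q) := ⟨hq⟩
  rw [one_div, ← ENNReal.toReal_inv] at hlam
  have target_lt_one : ENNReal.ofReal (1 - ε) < 1 := ENNReal.ofReal_lt_one.2 (by linarith)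
  obtain ⟨m₁, hm₁⟩ := eventually_atTop.1
    ((tendsto_gaussianMatrix_le_radq (q := q) hlam0 hlam hσ hρ n).eventually_const_le target_lt_one)
  exact ⟨max m₁ (n + 1), by omega, fun m hm => hm₁ m (by omega)⟩

/-- For `1 < p ≤ 2` and `0 < λ < 1/p*` (note `1/p* = 1 - 1/p`), and
`σ_j = j^{-λ}` (0-indexed), for every `ε ∈ (0,1)` and every `n` there is `m₀ > n` such that
for all `m ≥ m₀`, with probability at least `1 - ε` the circumradius of a random section of
codimension `n` is at least `1/2`. -/
theorem statement4 (p : ℝ≥0∞) (hp1 : 1 < p) (hp2 : p ≤ 2) (lam : ℝ)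
    (hlam0 : 0 < lam) (hlam : lam < 1 - 1 / p.toReal) :
    ∀ ε : ℝ, 0 < ε → ε < 1 → ∀ n : ℕ, 1 ≤ n →
      ∃ m₀ : ℕ, n < m₀ ∧ ∀ m : ℕ, m₀ ≤ m →
        ENNReal.ofReal (1 - ε) ≤
          gaussianMatrix n m {A |
            1 / 2 ≤ radq 2 (ellipsoid p (fun j : Fin m => ((j : ℕ) + 1 : ℝ) ^ (-lam)))
              (kerSet A)} := by
  exact fun ε hε _ n _ => statement4_general hp1.le one_le_two hlam0.le hlam (fun _ => le_rfl)
    (by norm_num) hε n
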